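/- arXiv:2506.01429 — 3 statements merged into one kernel-verified Lean document; each statement's English description precedes it below -/
import Mathlib

section
/- Chen's identity: Let d ≥ 1 and let X : [0,1] → ℝ^d be a path whose coordinate functions X_1, …, X_d are continuously differentiable. Then for every s ∈ [0,1] and every word w = (i_1, …, i_k) with letters in {1, …, d}, the signature coefficient over [0,1] factors through s: σ_{0,1}(X)_w = Σ σ_{0,s}(X)_u · σ_{s,1}(X)_v, where the sum ranges over all k+1 ways of splitting w as a concatenation w = u·v of a (possibly empty) prefix u and suffix v. -/
/-- The signature coefficient of the path `X` over `[a,b]` at a word `w`: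
for `w = i₁ ⋯ i_k`, it is the iterated integral
`∫_{a < t₁ < ⋯ < t_k < b} X_{i₁}'(t₁) ⋯ X_{i_k}'(t_k)`, and `1` for the empty word. -/
noncomputable def sig {d : ℕ} (X : ℝ → Fin d → ℝ) (a b : ℝ) : List (Fin d) → ℝ
  | [] => 1
  | i :: w => ∫ t in a..b, deriv (fun s => X s i) t * sig X t b w

/-!
The recursion defining `sig` peels off the first letter `i` of a word `i :: w` and integrates it
over the lower endpoint. Cut this outer integral over `[a, b]` at `s`. The piece over `[s, b]` is
the splitting of `i :: w` with empty prefix. In the piece over `[a, s]`, induction splits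
`sig X t b w` at `s`, and integrating against `X_i'` attaches `i` to the prefix of each splitting
of `w`, which gives the splittings of `i :: w` with nonempty prefix.
-/

section

open Set MeasureTheory

variable {d : ℕ} {X : ℝ → Fin d → ℝ} {p q a s b : ℝ}

theorem sig_nil (X : ℝ → Fin d → ℝ) (a b : ℝ) : sig X a b [] = 1 := rfl

theorem sig_cons (X : ℝ → Fin d → ℝ) (a b : ℝ) (i : Fin d) (w : List (Fin d)) :
    sig X a b (i :: w) = ∫ t in a..b, deriv (fun r => X r i) t * sig X t b w := rfl

theorem continuousOn_sig_left
    (hX : ∀ i, IntervalIntegrable (deriv fun t => X t i) volume p q)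
    (hb : b ∈ uIcc p q) (w : List (Fin d)) :
    ContinuousOn (fun a => sig X a b w) (uIcc p q) := by
  induction w with
  | nil => exact continuousOn_const
  | cons i w ih =>
    have primitive_eq : (fun a => sig X a b (i :: w)) =
        fun a => -∫ t in b..a, deriv (fun r => X r i) t * sig X t b w :=
      funext fun a => intervalIntegral.integral_symm b a
    rw [primitive_eq]
    exact (intervalIntegral.continuousOn_primitive_interval'
      ((hX i).mul_continuousOn ih) hb).neg

theorem intervalIntegrable_deriv_mul_sig
    (hX : ∀ i, IntervalIntegrable (deriv fun t => X t i) volume p q)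
    (ha : a ∈ uIcc p q) (hs : s ∈ uIcc p q) (hb : b ∈ uIcc p q)
    (i : Fin d) (w : List (Fin d)) :
    IntervalIntegrable (fun t => deriv (fun r => X r i) t * sig X t b w) volume a s :=
  ((hX i).mul_continuousOn (continuousOn_sig_left hX hb w)).mono_set (uIcc_subset_uIcc ha hs)

theorem sig_cons_eq_integral_add_sig_cons
    (hX : ∀ i, IntervalIntegrable (deriv fun t => X t i) volume p q)
    (ha : a ∈ uIcc p q) (hs : s ∈ uIcc p q) (hb : b ∈ uIcc p q)
    (i : Fin d) (w : List (Fin d)) :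
    sig X a b (i :: w) =
      (∫ t in a..s, deriv (fun r => X r i) t * sig X t b w) + sig X s b (i :: w) :=
  (intervalIntegral.integral_add_adjacent_intervals
    (intervalIntegrable_deriv_mul_sig hX ha hs hb i w)
    (intervalIntegrable_deriv_mul_sig hX hs hb hb i w)).symm

theorem integral_deriv_mul_sum_sig_mul
    (hX : ∀ i, IntervalIntegrable (deriv fun t => X t i) volume p q)
    (ha : a ∈ uIcc p q) (hb : b ∈ uIcc p q) (i : Fin d)
    {ι : Type*} (J : Finset ι) (u : ι → List (Fin d)) (c : ι → ℝ) :
    ∫ t in a..b, deriv (fun r => X r i) t * ∑ j ∈ J, sig X t b (u j) * c j =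
      ∑ j ∈ J, sig X a b (i :: u j) * c j := by
  simp only [Finset.mul_sum, ← mul_assoc]
  rw [intervalIntegral.integral_finsetSum fun j _ =>
    (intervalIntegrable_deriv_mul_sig hX ha hb hb i (u j)).mul_const (c j)]
  simp only [intervalIntegral.integral_mul_const, sig_cons]

theorem chen_identity_general
    (hX : ∀ i, AbsolutelyContinuousOnInterval (fun t => X t i) p q)
    (ha : a ∈ uIcc p q) (hs : s ∈ uIcc p q) (hb : b ∈ uIcc p q) (w : List (Fin d)) :
    sig X a b w =
      ∑ j ∈ Finset.range (w.length + 1), sig X a s (w.take j) * sig X s b (w.drop j) := by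
  have hX' : ∀ i, IntervalIntegrable (deriv fun t => X t i) volume p q :=
    fun i => (hX i).intervalIntegrable_deriv
  induction w generalizing a with
  | nil => simp [sig_nil]
  | cons i w ih =>
    calc
      sig X a b (i :: w)
        = (∫ t in a..s, deriv (fun r => X r i) t * sig X t b w) + sig X s b (i :: w) :=
          sig_cons_eq_integral_add_sig_cons hX' ha hs hb i w
      _ = (∫ t in a..s, deriv (fun r => X r i) t *
            ∑ j ∈ Finset.range (w.length + 1), sig X t s (w.take j) * sig X s b (w.drop j)) +
          sig X s b (i :: w) := by
        congr 1
        refine intervalIntegral.integral_congr fun t ht => ?_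
        simp only [ih (uIcc_subset_uIcc ha hs ht)]
      _ = ∑ j ∈ Finset.range (w.length + 1), sig X a s (i :: w.take j) * sig X s b (w.drop j) +
          sig X s b (i :: w) := by
        rw [integral_deriv_mul_sum_sig_mul hX' ha hs]
      _ = ∑ j ∈ Finset.range ((i :: w).length + 1),
            sig X a s ((i :: w).take j) * sig X s b ((i :: w).drop j) := by
        simp [Finset.sum_range_succ' _ (w.length + 1), sig_nil]

end

/-- **Chen's identity.**  For a path `X : [0,1] → ℝ^d` with continuously differentiable
coordinate functions, every `s ∈ [0,1]` and every word `w`, the signature coefficient over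
`[0,1]` factors through `s`: it is the sum, over all `k+1` splittings of `w` into a prefix
`u` and a suffix `v`, of `σ_(0,s)(X)_u * σ_(s,1)(X)_v`. -/
theorem chen_identity (d : ℕ) (hd : 1 ≤ d) (X : ℝ → Fin d → ℝ)
    (hX : ∀ i, ContDiff ℝ 1 fun t => X t i)
    (s : ℝ) (hs : s ∈ Set.Icc (0 : ℝ) 1) (w : List (Fin d)) :
    sig X 0 1 w =
      ∑ j ∈ Finset.range (w.length + 1), sig X 0 s (w.take j) * sig X s 1 (w.drop j) := by
  exact chen_identity_general (fun i => (hX i).contDiffOn.absolutelyContinuousOnInterval)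
    Set.left_mem_uIcc (Set.Icc_subset_uIcc hs) Set.right_mem_uIcc w
end

section
/- Equivalent characterizations of Lyndon words: a nonempty word w over a linearly ordered alphabet is strictly smaller in lexicographic order than every proper rotation of itself (i.e., than every word v·u with w = u·v and u, v both nonempty) if and only if w is strictly smaller in lexicographic order than every proper nonempty suffix of itself. -/
/-!
If `w = u ++ v` and `w` precedes `v ++ u`, then either `w` already precedes `v`, or `v` is also a
prefix of `w`. In the latter case write `w = v ++ t`; cancelling `v` shows that `t` precedes `u`.
As `t` and `u` have the same length, this is decided at a position inside both, so the rotation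
`t ++ v` of `w` precedes `u ++ v = w`, contrary to the minimality of `w` among its rotations.
-/

section

variable {α : Type*} {r : α → α → Prop}

theorem lex_append_right_iff {w v u : List α} :
    List.Lex r w (v ++ u) ↔ List.Lex r w v ∨ ∃ t, w = v ++ t ∧ List.Lex r t u := by
  constructor
  · intro h
    induction v generalizing w with
    | nil => exact .inr ⟨w, rfl, h⟩
    | cons a v ih =>
      cases h with
      | nil => exact .inl .nil
      | rel hlt => exact .inl (.rel hlt)
      | cons htail =>
        obtain hv | ⟨t, rfl, htu⟩ := ih htail
        · exact .inl (.cons hv)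
        · exact .inr ⟨t, rfl, htu⟩
  · rintro (hv | ⟨t, rfl, htu⟩)
    · exact hv.append_right r u
    · exact htu.append_left r v

theorem lex_append_append_of_length_le {s t : List α} (h : List.Lex r s t)
    (hlen : t.length ≤ s.length) (x y : List α) : List.Lex r (s ++ x) (t ++ y) := by
  induction h with
  | nil => exact absurd hlen (Nat.not_succ_le_zero _)
  | rel hlt => exact .rel hlt
  | cons _ ih => exact .cons (ih (Nat.le_of_succ_le_succ hlen))

theorem lyndon_characterizations_general [Std.Asymm r] (w : List α) :
    (∀ u v : List α, w = u ++ v → u ≠ [] → v ≠ [] → List.Lex r w (v ++ u)) ↔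
      (∀ u v : List α, w = u ++ v → u ≠ [] → v ≠ [] → List.Lex r w v) := by
  constructor
  · intro hrot u v huv hu hv
    obtain hwv | ⟨t, hvt, htu⟩ := lex_append_right_iff.mp (hrot u v huv hu hv)
    · exact hwv
    · have hlen : u.length = t.length := by
        have := congrArg List.length (huv.symm.trans hvt)
        simp only [List.length_append] at this
        omega
      have ht : t ≠ [] := by
        rintro rfl
        exact hu (List.length_eq_zero_iff.mp hlen)
      have hrot_lt : List.Lex r (t ++ v) w :=
        huv ▸ lex_append_append_of_length_le htu hlen.le v v
      exact absurd (hrot v t hvt hv ht) (asymm hrot_lt)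
  · intro hsuff u v huv hu hv
    exact lex_append_right_iff.mpr (.inl (hsuff u v huv hu hv))

end

/-- **Equivalent characterizations of Lyndon words**: a nonempty word `w` over a linearly
ordered alphabet is strictly smaller in lexicographic order than every proper rotation of
itself (i.e. than every word `v ++ u` where `w = u ++ v` with `u, v` nonempty) if and only
if `w` is strictly smaller in lexicographic order than every proper nonempty suffix of
itself. -/
theorem lyndon_characterizations {α : Type*} [LinearOrder α] (w : List α) (hw : w ≠ []) :
    (∀ u v : List α, w = u ++ v → u ≠ [] → v ≠ [] → List.Lex (· < ·) w (v ++ u)) ↔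
      (∀ u v : List α, w = u ++ v → u ≠ [] → v ≠ [] → List.Lex (· < ·) w v) :=
  lyndon_characterizations_general w
end

section
/- Polynomial evaluation via shuffles: Let d ≥ 1 and let X : [0,1] → ℝ^d be a path whose coordinate functions are continuously differentiable, with X(0) = 0. Let φ_d : ℝ[x_1, …, x_d] → (ℝ⟨1, …, d⟩, ⧢) be the unique ℝ-algebra homomorphism from the polynomial ring to the shuffle algebra sending x_i to the single-letter word (i), so that a monomial x_{i_1} ⋯ x_{i_l} is sent to (i_1) ⧢ ⋯ ⧢ (i_l). Extend w ↦ σ(X)_w linearly to ℝ⟨1, …, d⟩. Then for every polynomial q ∈ ℝ[x_1, …, x_d], ⟨σ(X), φ_d(q)⟩ = q(X(1)). -/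
/-- The shuffle product of two words, as an element of the free vector space
`ℝ⟨1,…,d⟩` with basis the words over `{1,…,d}`.  It is determined recursively by
`e ⧢ w = w ⧢ e = w` and `(u·a) ⧢ (v·b) = (u ⧢ (v·b))·a + ((u·a) ⧢ v)·b`. -/
noncomputable def shufW {d : ℕ} : List (Fin d) → List (Fin d) → (List (Fin d) →₀ ℝ)
  | u, v =>
    match hu : u.reverse, hv : v.reverse with
    | [], _ => Finsupp.single v 1
    | _ :: _, [] => Finsupp.single u 1
    | a :: u', b :: v' =>
        Finsupp.mapDomain (· ++ [a]) (shufW u'.reverse (v'.reverse ++ [b]))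
          + Finsupp.mapDomain (· ++ [b]) (shufW (u'.reverse ++ [a]) v'.reverse)
termination_by u v => u.length + v.length
decreasing_by
  all_goals
    (have h1 : u.length = u'.length + 1 := by
        have := congrArg List.length hu; simpa using this
     have h2 : v.length = v'.length + 1 := by
        have := congrArg List.length hv; simpa using this
     simp [h1, h2] <;> omega)

/-- The bilinear extension of the shuffle product to the free vector space `ℝ⟨1,…,d⟩`. -/
noncomputable def shuffleF {d : ℕ} (f g : List (Fin d) →₀ ℝ) : List (Fin d) →₀ ℝ :=
  f.sum fun u a => g.sum fun v b => (a * b) • shufW u v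

/-- The linear extension of `w ↦ σ(X)_w` to a linear functional on `ℝ⟨1,…,d⟩`. -/
noncomputable def sigL {d : ℕ} (X : ℝ → Fin d → ℝ) (f : List (Fin d) →₀ ℝ) : ℝ :=
  f.sum fun w a => a * sig X 0 1 w

/-!
Integration by parts turns the product of two iterated integrals into a sum of two integrals whose
integrands peel off the first letter of one word or the other. This is the shuffle recursion read
from the left, so the signature is a character of the shuffle algebra. Hence `q ↦ ⟨σ(X), φ q⟩` is
multiplicative, as is evaluation at the increment of the path, and the two agree on the variables
by the fundamental theorem of calculus.
-/

open MeasureTheory Set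

section Shuffle

variable {d : ℕ}

lemma shufW_nil_left (v : List (Fin d)) : shufW [] v = Finsupp.single v 1 := by
  rw [shufW]
  rfl

lemma shufW_nil_right (u : List (Fin d)) : shufW u [] = Finsupp.single u 1 := by
  rw [shufW]
  split
  case h_1 h => rw [List.reverse_eq_nil_iff.mp h]
  case h_2 => rfl
  case h_3 h => exact absurd h (List.cons_ne_nil _ _).symm

lemma shufW_append_singleton_append_singleton (u v : List (Fin d)) (a b : Fin d) :
    shufW (u ++ [a]) (v ++ [b]) =
      Finsupp.mapDomain (· ++ [a]) (shufW u (v ++ [b])) +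
        Finsupp.mapDomain (· ++ [b]) (shufW (u ++ [a]) v) := by
  rw [shufW]
  split
  case h_1 h => simp at h
  case h_2 h => simp at h
  case h_3 hu hv =>
    simp only [List.reverse_append, List.reverse_singleton, List.singleton_append,
      List.cons.injEq] at hu hv
    obtain ⟨rfl, rfl⟩ := hu
    obtain ⟨rfl, rfl⟩ := hv
    simp only [List.reverse_reverse]

lemma mapDomain_cons_mapDomain_append {α M : Type*} [AddCommMonoid M] (a : α) (w : List α)
    (f : List α →₀ M) :
    Finsupp.mapDomain (List.cons a) (Finsupp.mapDomain (· ++ w) f) =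
      Finsupp.mapDomain (· ++ w) (Finsupp.mapDomain (List.cons a) f) := by
  simp only [← Finsupp.mapDomain_comp]
  rfl

lemma shufW_singleton_cons (a b : Fin d) (v : List (Fin d)) :
    shufW [a] (b :: v) =
      Finsupp.single (a :: b :: v) 1 + Finsupp.mapDomain (List.cons b) (shufW [a] v) := by
  induction v using List.reverseRecOn with
  | nil =>
    have h := shufW_append_singleton_append_singleton [] [] a b
    simp only [List.nil_append, shufW_nil_left, shufW_nil_right, Finsupp.mapDomain_single,
      List.singleton_append] at h ⊢
    rw [h, add_comm]
  | append_singleton v c ih =>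
    have h := shufW_append_singleton_append_singleton [] (b :: v) a c
    have hv := shufW_append_singleton_append_singleton [] v a c
    simp only [List.nil_append, List.cons_append, shufW_nil_left] at h hv
    rw [h, hv, ih]
    simp only [Finsupp.mapDomain_add, Finsupp.mapDomain_single, List.cons_append,
      mapDomain_cons_mapDomain_append]
    abel

lemma shufW_cons_singleton (a b : Fin d) (u : List (Fin d)) :
    shufW (a :: u) [b] =
      Finsupp.mapDomain (List.cons a) (shufW u [b]) + Finsupp.single (b :: a :: u) 1 := by
  induction u using List.reverseRecOn with
  | nil =>
    rw [shufW_singleton_cons, shufW_nil_left, shufW_nil_right, Finsupp.mapDomain_single,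
      Finsupp.mapDomain_single]
  | append_singleton u c ih =>
    have h := shufW_append_singleton_append_singleton (a :: u) [] c b
    have hu := shufW_append_singleton_append_singleton u [] c b
    simp only [List.nil_append, List.cons_append, shufW_nil_right] at h hu
    rw [h, hu, ih]
    simp only [Finsupp.mapDomain_add, Finsupp.mapDomain_single, List.cons_append,
      mapDomain_cons_mapDomain_append]
    abel

/- The recursion defining `shufW` removes last letters, while the recursion defining `sig` removes
first letters. -/
lemma shufW_cons_cons (a b : Fin d) (u v : List (Fin d)) :
    shufW (a :: u) (b :: v) =
      Finsupp.mapDomain (List.cons a) (shufW u (b :: v)) +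
        Finsupp.mapDomain (List.cons b) (shufW (a :: u) v) := by
  induction u using List.reverseRecOn generalizing v with
  | nil => rw [shufW_singleton_cons, shufW_nil_left, Finsupp.mapDomain_single]
  | append_singleton u c ihu =>
    induction v using List.reverseRecOn with
    | nil => rw [shufW_cons_singleton, shufW_nil_right, Finsupp.mapDomain_single]
    | append_singleton v e ihv =>
      have h := shufW_append_singleton_append_singleton (a :: u) (b :: v) c e
      have hu := shufW_append_singleton_append_singleton u (b :: v) c e
      have hv := shufW_append_singleton_append_singleton (a :: u) v c e
      simp only [List.cons_append] at h hu hv ihv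
      rw [h, hu, hv, ihu, ihv]
      simp only [Finsupp.mapDomain_add, mapDomain_cons_mapDomain_append]
      abel

end Shuffle

lemma integral_mul_integral_eq_integral_mul_integral_add {f g : ℝ → ℝ} {a b : ℝ}
    (hf : IntervalIntegrable f volume a b) (hg : IntervalIntegrable g volume a b) :
    (∫ t in a..b, f t) * ∫ t in a..b, g t =
      ∫ t in a..b, (f t * (∫ s in t..b, g s) + g t * ∫ s in t..b, f s) := by
  have h_parts := (hf.absolutelyContinuousOnInterval_intervalIntegral
    right_mem_uIcc).integral_deriv_mul_eq_sub
      (hg.absolutelyContinuousOnInterval_intervalIntegral right_mem_uIcc)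
  have h_congr : ∀ᵐ t, t ∈ uIoc a b →
      deriv (fun x => ∫ s in b..x, f s) t * (∫ s in b..t, g s) +
          (∫ s in b..t, f s) * deriv (fun x => ∫ s in b..x, g s) t =
        -(f t * (∫ s in t..b, g s) + g t * ∫ s in t..b, f s) := by
    filter_upwards [hf.ae_hasDerivAt_integral, hg.ae_hasDerivAt_integral] with t hft hgt ht
    have ht' := uIoc_subset_uIcc ht
    rw [(hft ht' b right_mem_uIcc).deriv, (hgt ht' b right_mem_uIcc).deriv,
      intervalIntegral.integral_symm t b, intervalIntegral.integral_symm t b]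
    ring
  rw [intervalIntegral.integral_congr_ae h_congr, intervalIntegral.integral_neg,
    intervalIntegral.integral_same, intervalIntegral.integral_symm a b,
    intervalIntegral.integral_symm a b] at h_parts
  linarith

section Signature

variable {d : ℕ} {X : ℝ → Fin d → ℝ} {a b : ℝ}

/-- The signature of `X` over `[a, b]` as a linear functional on `ℝ⟨1,…,d⟩`; `sigL X` is the case
`a = 0`, `b = 1`. The left endpoint has to vary, since `sig` integrates over it. -/
noncomputable def sigFunctional (X : ℝ → Fin d → ℝ) (a b : ℝ) : (List (Fin d) →₀ ℝ) →ₗ[ℝ] ℝ :=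
  Finsupp.linearCombination ℝ (sig X a b)

lemma sigFunctional_single (w : List (Fin d)) (c : ℝ) :
    sigFunctional X a b (Finsupp.single w c) = c * sig X a b w := by
  rw [sigFunctional, Finsupp.linearCombination_single, smul_eq_mul]

lemma sigL_eq_sigFunctional (f : List (Fin d) →₀ ℝ) : sigL X f = sigFunctional X 0 1 f := rfl

lemma continuousOn_sig (hX : ∀ i, IntervalIntegrable (deriv fun s => X s i) volume a b)
    (w : List (Fin d)) : ContinuousOn (fun t => sig X t b w) (uIcc a b) := by
  induction w with
  | nil => exact continuousOn_const
  | cons i w ih =>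
    have h_int := (hX i).mul_continuousOn ih
    rw [intervalIntegrable_iff'] at h_int
    exact intervalIntegral.continuousOn_primitive_interval_left h_int

lemma continuousOn_sigFunctional
    (hX : ∀ i, IntervalIntegrable (deriv fun s => X s i) volume a b) (f : List (Fin d) →₀ ℝ) :
    ContinuousOn (fun t => sigFunctional X t b f) (uIcc a b) :=
  continuousOn_finsetSum _ fun w _ => (continuousOn_sig hX w).const_smul (f w)

lemma intervalIntegrable_deriv_mul_sigFunctional
    (hX : ∀ i, IntervalIntegrable (deriv fun s => X s i) volume a b) (i : Fin d)
    (f : List (Fin d) →₀ ℝ) :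
    IntervalIntegrable (fun t => deriv (fun s => X s i) t * sigFunctional X t b f) volume a b :=
  (hX i).mul_continuousOn (continuousOn_sigFunctional hX f)

lemma sigFunctional_mapDomain_cons
    (hX : ∀ i, IntervalIntegrable (deriv fun s => X s i) volume a b) (i : Fin d)
    (f : List (Fin d) →₀ ℝ) :
    sigFunctional X a b (Finsupp.mapDomain (List.cons i) f) =
      ∫ t in a..b, deriv (fun s => X s i) t * sigFunctional X t b f := by
  induction f using Finsupp.induction_linear with
  | zero => simp
  | add f g hf hg =>
    simp only [Finsupp.mapDomain_add, map_add, mul_add, hf, hg]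
    exact (intervalIntegral.integral_add (intervalIntegrable_deriv_mul_sigFunctional hX i f)
      (intervalIntegrable_deriv_mul_sigFunctional hX i g)).symm
  | single w c =>
    simp only [Finsupp.mapDomain_single, sigFunctional_single, sig, mul_left_comm _ c,
      intervalIntegral.integral_const_mul]

theorem sigFunctional_shufW (hX : ∀ i, IntervalIntegrable (deriv fun s => X s i) volume a b)
    (u v : List (Fin d)) : sigFunctional X a b (shufW u v) = sig X a b u * sig X a b v := by
  induction u generalizing a v with
  | nil => rw [shufW_nil_left, sigFunctional_single, sig]
  | cons i u ihu =>
    induction v generalizing a with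
    | nil => rw [shufW_nil_right, sigFunctional_single, sig.eq_1, mul_comm]
    | cons j v ihv =>
      have hX_sub {t : ℝ} (ht : t ∈ uIcc a b) (k : Fin d) :
          IntervalIntegrable (deriv fun s => X s k) volume t b :=
        (hX k).mono_set (uIcc_subset_uIcc_right ht)
      have h_left : ∫ t in a..b, deriv (fun s => X s i) t * sigFunctional X t b (shufW u (j :: v)) =
          ∫ t in a..b, deriv (fun s => X s i) t * sig X t b u * sig X t b (j :: v) :=
        intervalIntegral.integral_congr fun t ht => by
          simp only [ihu (hX_sub ht), mul_assoc]
      have h_right :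
          ∫ t in a..b, deriv (fun s => X s j) t * sigFunctional X t b (shufW (i :: u) v) =
            ∫ t in a..b, deriv (fun s => X s j) t * sig X t b v * sig X t b (i :: u) :=
        intervalIntegral.integral_congr fun t ht => by
          simp only [ihv (hX_sub ht), mul_assoc, mul_comm (sig X t b v)]
      have hu := (hX i).mul_continuousOn (continuousOn_sig hX u)
      have hv := (hX j).mul_continuousOn (continuousOn_sig hX v)
      rw [shufW_cons_cons, map_add, sigFunctional_mapDomain_cons hX,
        sigFunctional_mapDomain_cons hX, h_left, h_right,
        ← intervalIntegral.integral_add (hu.mul_continuousOn (continuousOn_sig hX (j :: v)))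
          (hv.mul_continuousOn (continuousOn_sig hX (i :: u)))]
      exact (integral_mul_integral_eq_integral_mul_integral_add hu hv).symm

theorem sigFunctional_shuffleF (hX : ∀ i, IntervalIntegrable (deriv fun s => X s i) volume a b)
    (f g : List (Fin d) →₀ ℝ) :
    sigFunctional X a b (shuffleF f g) = sigFunctional X a b f * sigFunctional X a b g := by
  simp only [shuffleF, map_finsuppSum, map_smul, sigFunctional_shufW hX]
  simp only [sigFunctional, Finsupp.linearCombination_apply, Finsupp.sum, Finset.sum_mul_sum,
    smul_eq_mul, mul_mul_mul_comm]

lemma sig_singleton {i : Fin d} (hX : AbsolutelyContinuousOnInterval (fun t => X t i) a b) :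
    sig X a b [i] = X b i - X a i := by
  simp only [sig, mul_one, hX.integral_deriv_eq_sub]

end Signature

theorem polynomial_evaluation_via_shuffles_general {d : ℕ} {X : ℝ → Fin d → ℝ} {a b : ℝ}
    (hX : ∀ i, AbsolutelyContinuousOnInterval (fun t => X t i) a b)
    (φ : MvPolynomial (Fin d) ℝ →ₗ[ℝ] (List (Fin d) →₀ ℝ))
    (hφone : φ 1 = Finsupp.single [] 1)
    (hφmul : ∀ p q : MvPolynomial (Fin d) ℝ, φ (p * q) = shuffleF (φ p) (φ q))
    (hφX : ∀ i : Fin d, φ (MvPolynomial.X i) = Finsupp.single [i] 1)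
    (q : MvPolynomial (Fin d) ℝ) :
    sigFunctional X a b (φ q) = MvPolynomial.eval (fun i => X b i - X a i) q := by
  induction q using MvPolynomial.induction_on with
  | C c =>
    rw [MvPolynomial.eval_C, ← mul_one (MvPolynomial.C c), ← MvPolynomial.smul_eq_C_mul, map_smul,
      map_smul, hφone, sigFunctional_single, sig, one_mul, smul_eq_mul, mul_one]
  | add p q hp hq => rw [map_add, map_add, map_add, hp, hq]
  | mul_X p i hp =>
    rw [hφmul, sigFunctional_shuffleF fun j => (hX j).intervalIntegrable_deriv, hp, hφX,
      sigFunctional_single, sig_singleton (hX i), one_mul, map_mul, MvPolynomial.eval_X]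

/-- **Polynomial evaluation via shuffles**: let `X : [0,1] → ℝ^d` be a path with
continuously differentiable coordinates and `X 0 = 0`, and let `φ` be the unique
`ℝ`-algebra homomorphism from the polynomial ring `ℝ[x₁,…,x_d]` to the shuffle algebra
`(ℝ⟨1,…,d⟩, ⧢)` sending `xᵢ` to the single-letter word `(i)` (i.e. `φ` is linear, unital,
multiplicative from products to shuffles, and sends variables to letters).  Then for every
polynomial `q`, the signature functional evaluated on `φ q` equals `q (X 1)`. -/
theorem polynomial_evaluation_via_shuffles (d : ℕ) (hd : 1 ≤ d) (X : ℝ → Fin d → ℝ)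
    (hX : ∀ i, ContDiff ℝ 1 fun t => X t i) (hX0 : ∀ i, X 0 i = 0)
    (φ : MvPolynomial (Fin d) ℝ →ₗ[ℝ] (List (Fin d) →₀ ℝ))
    (hφone : φ 1 = Finsupp.single [] 1)
    (hφmul : ∀ p q : MvPolynomial (Fin d) ℝ, φ (p * q) = shuffleF (φ p) (φ q))
    (hφX : ∀ i : Fin d, φ (MvPolynomial.X i) = Finsupp.single [i] 1)
    (q : MvPolynomial (Fin d) ℝ) :
    sigL X (φ q) = MvPolynomial.eval (fun i => X 1 i) q := by
  have hX_ac i : AbsolutelyContinuousOnInterval (fun t => X t i) 0 1 :=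
    (hX i).contDiffOn.absolutelyContinuousOnInterval
  simpa only [sigL_eq_sigFunctional, hX0, sub_zero] using
    polynomial_evaluation_via_shuffles_general hX_ac φ hφone hφmul hφX q
end
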